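/- Let $\vec{P}=(p_1,p_2)$ with $1<p_1,p_2<\infty$, $1/p=1/p_1+1/p_2$ and $1<p<\infty$, let $\vec{w}=(w_1,w_2)\in A_{\vec{P}}$, let $\mathscr{D}$ be a dyadic cubes system in $\mathbb{R}^n$ and $\mathcal{S}\subset\mathscr{D}$ a sparse family. Then the following two assertions are equivalent, with the best constants $C$ in each comparable up to a factor depending only on $n$ and $\vec{P}$: (1) $\|A_{\mathscr{D},\mathcal{S}}(|f_1|\sigma_1,|f_2|\sigma_2)\|_{L^{p,\infty}(v_{\vec{w}})}\le C\prod_{i=1}^2\|f_i\|_{L^{p_i}(\sigma_i)}$ for all $f_i\in L^{p_i}(\sigma_i)$; (2) $\int_Q A_{\mathscr{D},\mathcal{S}}(|f_1|\sigma_1\chi_Q,|f_2|\sigma_2\chi_Q)\,v_{\vec{w}}\,dx\le C\prod_{i=1}^2\|f_i\|_{L^{p_i}(\sigma_i)}\,v_{\vec{w}}(Q)^{1/p'}$ for all cubes $Q\in\mathcal{S}$ and all $f_i\in L^{p_i}(\sigma_i)$, $i=1,2$. -/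

import Mathlib

open MeasureTheory Set ENNReal

noncomputable section

/-- Euclidean space `ℝⁿ`. -/
abbrev Rn (n : ℕ) := Fin n → ℝ

/-- `Q` is an axis-parallel (half-open) cube of sidelength `h`. -/
def HasSide {n : ℕ} (Q : Set (Rn n)) (h : ℝ) : Prop :=
  ∃ c : Rn n, Q = {x | ∀ i, c i ≤ x i ∧ x i < c i + h}

/-- `Q` is an axis-parallel cube (with positive sidelength). -/
def IsCube {n : ℕ} (Q : Set (Rn n)) : Prop :=
  ∃ h : ℝ, 0 < h ∧ HasSide Q h

/-- A dyadic cubes system: cubes of sidelengths `2^k`, pairwise nested or disjoint,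
and for each fixed `k` the cubes of sidelength `2^k` cover (hence partition) `ℝⁿ`. -/
def IsDyadicSystem {n : ℕ} (D : Set (Set (Rn n))) : Prop :=
  (∀ Q ∈ D, ∃ k : ℤ, HasSide Q ((2 : ℝ) ^ k)) ∧
  (∀ Q ∈ D, ∀ R ∈ D, Q ∩ R = Q ∨ Q ∩ R = R ∨ Q ∩ R = ∅) ∧
  (∀ k : ℤ, ∀ x : Rn n, ∃ Q ∈ D, HasSide Q ((2 : ℝ) ^ k) ∧ x ∈ Q)

/-- A sparse family: each `Q` carries a measurable subset `E Q ⊆ Q` with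
`|E Q| ≥ |Q|/2`, the sets `E Q` being pairwise disjoint. -/
def IsSparse {n : ℕ} (S : Set (Set (Rn n))) : Prop :=
  ∃ E : Set (Rn n) → Set (Rn n),
    (∀ Q ∈ S, E Q ⊆ Q ∧ MeasurableSet (E Q) ∧ volume Q ≤ 2 * volume (E Q)) ∧
    S.Pairwise fun Q R => Disjoint (E Q) (E R)

/-- A weight: a measurable nonnegative (`ℝ≥0∞`-valued) locally integrable function. -/
def IsWeight {n : ℕ} (w : Rn n → ℝ≥0∞) : Prop :=
  Measurable w ∧ ∀ Q : Set (Rn n), IsCube Q → (∫⁻ x in Q, w x) ≠ ∞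

/-- `w(Q) = ∫_Q w`. -/
def mass {n : ℕ} (w : Rn n → ℝ≥0∞) (Q : Set (Rn n)) : ℝ≥0∞ := ∫⁻ x in Q, w x

/-- `⟨w⟩_Q = w(Q)/|Q|`. -/
def avg {n : ℕ} (w : Rn n → ℝ≥0∞) (Q : Set (Rn n)) : ℝ≥0∞ := mass w Q / volume Q

/-- The conjugate exponent `q' = q/(q-1)`. -/
def conj (q : ℝ) : ℝ := q / (q - 1)

/-- The product weight `v_w = w₁^{p/p₁} w₂^{p/p₂}`. -/
def vweight {n : ℕ} (p p1 p2 : ℝ) (w1 w2 : Rn n → ℝ≥0∞) : Rn n → ℝ≥0∞ :=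
  fun x => w1 x ^ (p / p1) * w2 x ^ (p / p2)

/-- The dual weight `σ = w^{1-q'}`. -/
def dualW {n : ℕ} (q : ℝ) (w : Rn n → ℝ≥0∞) : Rn n → ℝ≥0∞ :=
  fun x => w x ^ (1 - conj q)

/-- The multilinear `A_{\vec P}` constant
`[\vec w]_{A_{\vec P}} = sup_Q ⟨v_w⟩_Q ⟨σ₁⟩_Q^{p/p₁'} ⟨σ₂⟩_Q^{p/p₂'}`. -/
def APconst {n : ℕ} (p p1 p2 : ℝ) (w1 w2 : Rn n → ℝ≥0∞) : ℝ≥0∞ :=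
  ⨆ (Q : Set (Rn n)) (_ : IsCube Q),
    avg (vweight p p1 p2 w1 w2) Q * avg (dualW p1 w1) Q ^ (p / conj p1) *
      avg (dualW p2 w2) Q ^ (p / conj p2)

/-- The (linear) `A_q` constant `[w]_{A_q} = sup_Q ⟨w⟩_Q ⟨w^{1-q'}⟩_Q^{q-1}`. -/
def AqConst {n : ℕ} (q : ℝ) (w : Rn n → ℝ≥0∞) : ℝ≥0∞ :=
  ⨆ (Q : Set (Rn n)) (_ : IsCube Q),
    avg w Q * avg (fun x => w x ^ (1 - conj q)) Q ^ (q - 1)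

/-- The Hardy–Littlewood maximal operator (over axis-parallel cubes). -/
def HLMax {n : ℕ} (w : Rn n → ℝ≥0∞) (x : Rn n) : ℝ≥0∞ :=
  ⨆ (Q : Set (Rn n)) (_ : IsCube Q) (_ : x ∈ Q), avg w Q

/-- The Fujii–Wilson `A_∞` constant `[w]_{A_∞} = sup_Q w(Q)⁻¹ ∫_Q M(wχ_Q)`. -/
def AinfConst {n : ℕ} (w : Rn n → ℝ≥0∞) : ℝ≥0∞ :=
  ⨆ (Q : Set (Rn n)) (_ : IsCube Q), (∫⁻ x in Q, HLMax (Q.indicator w) x) / mass w Q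

/-- `‖g‖_{L^p(v)}` for an `ℝ≥0∞`-valued function. -/
def lpNorm {n : ℕ} (g : Rn n → ℝ≥0∞) (p : ℝ) (v : Rn n → ℝ≥0∞) : ℝ≥0∞ :=
  (∫⁻ x, g x ^ p * v x) ^ (1 / p)

/-- `‖g‖_{L^{p,∞}(v)} = sup_{t>0} t · v({g > t})^{1/p}`. -/
def wkNorm {n : ℕ} (g : Rn n → ℝ≥0∞) (p : ℝ) (v : Rn n → ℝ≥0∞) : ℝ≥0∞ :=
  ⨆ t : ℝ≥0∞, t * mass v {x | t < g x} ^ (1 / p)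

/-- The pointwise `ℝ≥0∞`-valued absolute value of a real function. -/
def eAbs {n : ℕ} (f : Rn n → ℝ) : Rn n → ℝ≥0∞ := fun x => (‖f x‖₊ : ℝ≥0∞)

/-- `f ∈ L^p(v)`. -/
def MemLpW {n : ℕ} (f : Rn n → ℝ) (p : ℝ) (v : Rn n → ℝ≥0∞) : Prop :=
  Measurable f ∧ lpNorm (eAbs f) p v ≠ ∞

/-- The bilinear sparse operator `A_{D,S}(g₁,g₂) = ∑_{Q∈S} ⟨g₁⟩_Q ⟨g₂⟩_Q χ_Q`. -/
def sparseOp {n : ℕ} (S : Set (Set (Rn n))) (g1 g2 : Rn n → ℝ≥0∞) (x : Rn n) : ℝ≥0∞ :=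
  ∑' Q : S, Set.indicator (Q : Set (Rn n)) (fun _ => avg g1 Q * avg g2 Q) x

/-- The weighted average `⟨f⟩_Q^w = (∫_Q |f| w)/w(Q)`. -/
def wAvg {n : ℕ} (f : Rn n → ℝ) (w : Rn n → ℝ≥0∞) (Q : Set (Rn n)) : ℝ≥0∞ :=
  (∫⁻ x in Q, (‖f x‖₊ : ℝ≥0∞) * w x) / mass w Q


/-- The exponent `β = 1/p + max{min{1/p₁', (1/p₁')(p₂'/p)}, min{1/p₂', (1/p₂')(p₁'/p)}}`. -/
def betaExp (p p1 p2 : ℝ) : ℝ :=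
  1 / p + max (min (1 / conj p1) (1 / conj p1 * (conj p2 / p)))
              (min (1 / conj p2) (1 / conj p2 * (conj p1 / p)))

/-- The exponent `γ = max{1, p₁'/p, p₂'/p}`. -/
def gammaExp (p p1 p2 : ℝ) : ℝ := max 1 (max (conj p1 / p) (conj p2 / p))

end

/-!
Fix `l` and a finite piece `∑ a_Q χ_Q` of the sparse operator applied to `(|f₁|σ₁, |f₂|σ₂)`, and
let `M` be the disjoint maximal cubes whose ancestors have coefficients adding up to more than `l`.
The cubes strictly containing `Q ∈ M` contribute at most `l` on `Q`, so wherever the sum exceeds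
`2l` its part coming from subcubes of `Q` exceeds `l`. That part does not change when `f₁` and `f₂`
are replaced by `f₁χ_Q` and `f₂χ_Q`; Chebyshev's inequality, the testing condition and Hölder's
inequality over the disjoint cubes of `M` give a good-`λ` inequality
`l v(∑ > 2l) ≤ C ‖f₁‖ ‖f₂‖ v(∑ > l)^{1 - 1/p}`. Its right-hand side is absorbed because the
weak norm of a finite sum is finite, and monotone convergence passes to the whole family. The
converse is Kolmogorov's inequality on `Q` applied to `f₁χ_Q` and `f₂χ_Q`.
-/

section Kolmogorov

variable {α : Type*} [MeasurableSpace α] {μ : Measure α} {g : α → ℝ≥0∞} {p : ℝ}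

lemma lintegral_eq_lintegral_measure_ofReal_lt (hg : Measurable g) :
    ∫⁻ x, g x ∂μ = ∫⁻ t in Ioi (0 : ℝ), μ {x | ENNReal.ofReal t < g x} := by
  by_cases htop : μ {x | g x = ∞} = 0
  · have hfin : ∀ᵐ x ∂μ, g x ≠ ∞ := by simpa only [ae_iff, not_not] using htop
    calc ∫⁻ x, g x ∂μ = ∫⁻ x, ENNReal.ofReal (g x).toReal ∂μ :=
          lintegral_congr_ae (hfin.mono fun x hx => (ENNReal.ofReal_toReal hx).symm)
      _ = ∫⁻ t in Ioi (0 : ℝ), μ {x | t < (g x).toReal} :=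
          lintegral_eq_lintegral_meas_lt μ (ae_of_all _ fun _ => ENNReal.toReal_nonneg)
            hg.ennreal_toReal.aemeasurable
      _ = ∫⁻ t in Ioi (0 : ℝ), μ {x | ENNReal.ofReal t < g x} :=
          setLIntegral_congr_fun measurableSet_Ioi fun t (ht : 0 < t) =>
            measure_congr (hfin.mono fun x hx =>
              propext (ENNReal.ofReal_lt_iff_lt_toReal ht.le hx).symm)
  · have hleft : ∫⁻ x, g x ∂μ = ∞ := by
      contrapose! htop
      exact measure_eq_top_of_lintegral_ne_top hg.aemeasurable htop
    have hright : ∫⁻ _ in Ioi (0 : ℝ), μ {x | g x = ∞} = ∞ := by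
      simp [ENNReal.mul_top htop]
    rw [hleft, eq_comm, eq_top_iff, ← hright]
    refine lintegral_mono fun t => measure_mono fun x (hx : g x = ∞) => ?_
    simp [hx]

lemma lintegral_Ioi_ofReal_div_rpow {T : ℝ} (hT : 0 < T) (hp : 1 < p) :
    ∫⁻ t in Ioi T, ENNReal.ofReal ((T / t) ^ p) = ENNReal.ofReal (T / (p - 1)) := by
  have hpow : EqOn (fun t => T ^ p * t ^ (-p)) (fun t => (T / t) ^ p) (Ioi T) :=
    fun t (ht : T < t) => by
      have ht0 : 0 ≤ t := (hT.trans ht).le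
      beta_reduce
      rw [Real.div_rpow hT.le ht0, Real.rpow_neg ht0, div_eq_mul_inv]
  have hint : IntegrableOn (fun t => T ^ p * t ^ (-p)) (Ioi T) :=
    (integrableOn_Ioi_rpow_of_lt (by linarith) hT).const_mul _
  have hnonneg : 0 ≤ᵐ[volume.restrict (Ioi T)] fun t => (T / t) ^ p :=
    (ae_restrict_mem measurableSet_Ioi).mono fun t (ht : T < t) =>
      Real.rpow_nonneg (div_pos hT (hT.trans ht)).le p
  have hTp : T ^ p * T ^ (-p + 1) = T := by
    rw [← Real.rpow_add hT, add_neg_cancel_left, Real.rpow_one]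
  rw [← ofReal_integral_eq_lintegral_ofReal (hint.congr_fun hpow measurableSet_Ioi) hnonneg,
    ← setIntegral_congr_fun measurableSet_Ioi hpow, integral_const_mul,
    integral_Ioi_rpow_of_lt (by linarith) hT, mul_div_assoc', mul_neg, hTp, ← neg_div_neg_eq,
    neg_neg, neg_add', neg_neg]

lemma lintegral_Ioi_min_one_div_rpow_le {T : ℝ} (hT : 0 < T) (hp : 1 < p) :
    ∫⁻ t in Ioi 0, min 1 (ENNReal.ofReal ((T / t) ^ p)) ≤ ENNReal.ofReal (conj p * T) := by
  have hp1 : 0 < p - 1 := sub_pos.2 hp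
  calc ∫⁻ t in Ioi 0, min 1 (ENNReal.ofReal ((T / t) ^ p))
      ≤ (∫⁻ t in Ioc 0 T, min 1 (ENNReal.ofReal ((T / t) ^ p))) +
          ∫⁻ t in Ioi T, min 1 (ENNReal.ofReal ((T / t) ^ p)) := by
        rw [← Ioc_union_Ioi_eq_Ioi hT.le]
        exact lintegral_union_le _ _ _
    _ ≤ (∫⁻ _ in Ioc 0 T, 1) + ∫⁻ t in Ioi T, ENNReal.ofReal ((T / t) ^ p) := by
        gcongr
        · exact min_le_left _ _
        · exact min_le_right _ _
    _ = ENNReal.ofReal (conj p * T) := by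
        rw [lintegral_Ioi_ofReal_div_rpow hT hp, setLIntegral_one, Real.volume_Ioc, sub_zero,
          ← ENNReal.ofReal_add hT.le (by positivity), conj]
        congr 1
        field_simp
        ring

lemma lintegral_le_of_measure_lt_le {V : ℝ≥0∞} {T : ℝ} (hg : Measurable g) (hp : 1 < p)
    (hT : 0 < T)
    (htail : ∀ t : ℝ, 0 < t →
      μ {x | ENNReal.ofReal t < g x} ≤ V * min 1 (ENNReal.ofReal ((T / t) ^ p))) :
    ∫⁻ x, g x ∂μ ≤ V * ENNReal.ofReal (conj p * T) := by
  rw [lintegral_eq_lintegral_measure_ofReal_lt hg]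
  calc ∫⁻ t in Ioi (0 : ℝ), μ {x | ENNReal.ofReal t < g x}
      ≤ ∫⁻ t in Ioi (0 : ℝ), V * min 1 (ENNReal.ofReal ((T / t) ^ p)) :=
        setLIntegral_mono' measurableSet_Ioi htail
    _ = V * ∫⁻ t in Ioi (0 : ℝ), min 1 (ENNReal.ofReal ((T / t) ^ p)) :=
        lintegral_const_mul _ (by fun_prop)
    _ ≤ V * ENNReal.ofReal (conj p * T) := by
        gcongr
        exact lintegral_Ioi_min_one_div_rpow_le hT hp

/-- The quasinorm of the weak Lebesgue space `L^{p,∞}(μ)`; `wkNorm g p v` is the case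
`μ = v dx`. -/
noncomputable def weakNorm (g : α → ℝ≥0∞) (p : ℝ) (μ : Measure α) : ℝ≥0∞ :=
  ⨆ t : ℝ≥0∞, t * μ {x | t < g x} ^ (1 / p)

lemma weakNorm_le_iff (hp : 0 < p) {B : ℝ≥0∞} :
    weakNorm g p μ ≤ B ↔ ∀ t : ℝ≥0∞, t ≠ 0 → t ≠ ∞ → μ {x | t < g x} ≤ (B / t) ^ p := by
  have hiff : ∀ t : ℝ≥0∞, t ≠ 0 → t ≠ ∞ →
      (t * μ {x | t < g x} ^ (1 / p) ≤ B ↔ μ {x | t < g x} ≤ (B / t) ^ p) := fun t ht0 ht => by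
    rw [mul_comm, ← ENNReal.le_div_iff_mul_le (.inl ht0) (.inl ht), one_div,
      ENNReal.rpow_inv_le_iff hp]
  refine iSup_le_iff.trans ⟨fun h t ht0 ht => (hiff t ht0 ht).1 (h t), fun h t => ?_⟩
  rcases eq_or_ne t 0 with rfl | ht0
  · simp
  rcases eq_or_ne t ∞ with rfl | ht
  · simp [hp]
  exact (hiff t ht0 ht).2 (h t ht0 ht)

lemma measure_lt_le_weakNorm_div_rpow (hp : 0 < p) {t : ℝ≥0∞} (ht0 : t ≠ 0) (ht : t ≠ ∞) :
    μ {x | t < g x} ≤ (weakNorm g p μ / t) ^ p :=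
  (weakNorm_le_iff hp).1 le_rfl t ht0 ht

lemma lintegral_le_of_measure_lt_le_min {V B : ℝ≥0∞} (hg : Measurable g) (hp : 1 < p)
    (hV0 : V ≠ 0) (hVt : V ≠ ∞) (hB0 : B ≠ 0) (hBt : B ≠ ∞)
    (htail : ∀ t : ℝ, 0 < t →
      μ {x | ENNReal.ofReal t < g x} ≤ min V ((B / ENNReal.ofReal t) ^ p)) :
    ∫⁻ x, g x ∂μ ≤ ENNReal.ofReal (conj p) * B * V ^ (1 - 1 / p) := by
  have hp0 : 0 < p := one_pos.trans hp
  have hconj : 0 ≤ conj p := (div_pos hp0 (sub_pos.2 hp)).le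
  have hVp0 : V ^ (1 / p) ≠ 0 := by simp [ENNReal.rpow_eq_zero_iff, hV0, hVt]
  have hVpt : V ^ (1 / p) ≠ ∞ := ENNReal.rpow_ne_top_of_nonneg (by positivity) hVt
  have hTt : B / V ^ (1 / p) ≠ ∞ := ENNReal.div_ne_top hBt hVp0
  -- the height at which the two bounds on the tail agree
  set T := (B / V ^ (1 / p)).toReal
  have hTB : ENNReal.ofReal T = B / V ^ (1 / p) := ENNReal.ofReal_toReal hTt
  have hT0 : 0 < T := ENNReal.toReal_pos (ENNReal.div_ne_zero.2 ⟨hB0, hVpt⟩) hTt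
  have hBT : B = V ^ (1 / p) * ENNReal.ofReal T := by
    rw [hTB, ENNReal.mul_div_cancel hVp0 hVpt]
  calc ∫⁻ x, g x ∂μ ≤ V * ENNReal.ofReal (conj p * T) := by
        refine lintegral_le_of_measure_lt_le hg hp hT0 fun t ht => (htail t ht).trans_eq ?_
        rw [mul_min, mul_one, hBT, mul_div_assoc, ← ENNReal.ofReal_div_of_pos ht,
          ENNReal.mul_rpow_of_nonneg _ _ hp0.le, ← ENNReal.rpow_mul, one_div_mul_cancel hp0.ne',
          ENNReal.rpow_one, ENNReal.ofReal_rpow_of_nonneg (by positivity) hp0.le]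
    _ = ENNReal.ofReal (conj p) * B * V ^ (1 - 1 / p) := by
        rw [ENNReal.ofReal_mul hconj, hTB, ENNReal.rpow_sub _ _ hV0 hVt, ENNReal.rpow_one]
        simp only [div_eq_mul_inv]
        ring

theorem setLIntegral_le_weakNorm_mul (hg : Measurable g) (hp : 1 < p) (Q : Set α) :
    ∫⁻ x in Q, g x ∂μ ≤
      ENNReal.ofReal (conj p) * weakNorm g p μ * μ Q ^ (1 - 1 / p) := by
  have hp0 : 0 < p := one_pos.trans hp
  have hconj : ENNReal.ofReal (conj p) ≠ 0 := by simpa [conj] using div_pos hp0 (sub_pos.2 hp)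
  have hexp : 0 < 1 - 1 / p := sub_pos.2 ((div_lt_one hp0).2 hp)
  have htail : ∀ t : ℝ, 0 < t → μ.restrict Q {x | ENNReal.ofReal t < g x} ≤
      min (μ Q) ((weakNorm g p μ / ENNReal.ofReal t) ^ p) :=
    fun t ht => le_min
      ((measure_mono (subset_univ _)).trans_eq (Measure.restrict_apply_univ Q))
      ((Measure.restrict_apply_le _ _).trans
        (measure_lt_le_weakNorm_div_rpow hp0 (by simpa using ht) ENNReal.ofReal_ne_top))
  rcases eq_or_ne (μ Q) 0 with hV0 | hV0
  · simp [setLIntegral_measure_zero Q g hV0]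
  rcases eq_or_ne (weakNorm g p μ) 0 with hB0 | hB0
  · have hzero := lintegral_le_of_measure_lt_le (V := 0) hg hp one_pos fun t ht => by
      simpa [hB0, hp0] using htail t ht
    exact (hzero.trans_eq (zero_mul _)).trans zero_le
  rcases eq_or_ne (μ Q) ∞ with hVt | hVt
  · rw [hVt, ENNReal.top_rpow_of_pos hexp, ENNReal.mul_top (mul_ne_zero hconj hB0)]
    exact le_top
  rcases eq_or_ne (weakNorm g p μ) ∞ with hBt | hBt
  · rw [hBt, ENNReal.mul_top hconj,
      ENNReal.top_mul (by simp [ENNReal.rpow_eq_zero_iff, hV0, hVt])]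
    exact le_top
  exact lintegral_le_of_measure_lt_le_min hg hp hV0 hVt hB0 hBt htail

end Kolmogorov

lemma weakNorm_le_eLpNorm {α : Type*} [MeasurableSpace α] {μ : Measure α} {g : α → ℝ≥0∞} {p : ℝ}
    (hg : Measurable g) (hp : 0 < p) :
    weakNorm g p μ ≤ eLpNorm g (ENNReal.ofReal p) μ := by
  refine iSup_le fun t => ?_
  have hmarkov := mul_meas_ge_le_pow_eLpNorm' μ (by simpa using hp) ENNReal.ofReal_ne_top
    hg.aestronglyMeasurable t (p := ENNReal.ofReal p)
  rw [ENNReal.toReal_ofReal hp.le, ← ENNReal.rpow_inv_le_iff hp,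
    ENNReal.mul_rpow_of_nonneg _ _ (inv_nonneg.2 hp.le), ENNReal.rpow_rpow_inv hp.ne'] at hmarkov
  rw [one_div]
  refine le_trans ?_ hmarkov
  gcongr
  exact fun hx => le_of_lt hx

lemma weakNorm_le_of_goodLambda {α : Type*} [MeasurableSpace α] {μ : Measure α} {g : α → ℝ≥0∞}
    {p : ℝ} {B : ℝ≥0∞} (hp : 1 < p) (hfin : weakNorm g p μ ≠ ∞)
    (hgood : ∀ l : ℝ≥0∞, l * μ {x | 2 * l < g x} ≤ B * μ {x | l < g x} ^ (1 - 1 / p)) :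
    weakNorm g p μ ≤ 2 ^ p * B := by
  have hp0 : 0 < p := one_pos.trans hp
  have hp1 : 0 < p - 1 := sub_pos.2 hp
  set N := weakNorm g p μ
  have hpow : ∀ y : ℝ≥0∞, y ^ p = y ^ (p - 1) * y := fun y => by
    simpa using ENNReal.rpow_add_of_nonneg (x := y) (p - 1) 1 hp1.le zero_le_one
  have hlevel : ∀ l : ℝ≥0∞,
      (2 * l * μ {x | 2 * l < g x} ^ (1 / p)) ^ p ≤ 2 ^ p * B * N ^ (p - 1) := fun l =>
    calc (2 * l * μ {x | 2 * l < g x} ^ (1 / p)) ^ p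
        = 2 ^ p * (l ^ (p - 1) * (l * μ {x | 2 * l < g x})) := by
          rw [ENNReal.mul_rpow_of_nonneg _ _ hp0.le, ENNReal.mul_rpow_of_nonneg _ _ hp0.le,
            ← ENNReal.rpow_mul, one_div_mul_cancel hp0.ne', ENNReal.rpow_one, hpow l]
          ring
      _ ≤ 2 ^ p * (l ^ (p - 1) * (B * μ {x | l < g x} ^ (1 - 1 / p))) := by
          gcongr 2 ^ p * (l ^ (p - 1) * ?_)
          exact hgood l
      _ = 2 ^ p * B * (l * μ {x | l < g x} ^ (1 / p)) ^ (p - 1) := by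
          rw [ENNReal.mul_rpow_of_nonneg _ _ hp1.le, ← ENNReal.rpow_mul,
            show 1 / p * (p - 1) = 1 - 1 / p by field_simp]
          ring
      _ ≤ 2 ^ p * B * N ^ (p - 1) := by
          gcongr
          exact le_iSup (fun t : ℝ≥0∞ => t * μ {x | t < g x} ^ (1 / p)) l
  have habsorb : N * N ^ (p - 1) ≤ 2 ^ p * B * N ^ (p - 1) := by
    rw [mul_comm N, ← hpow, ← ENNReal.le_rpow_inv_iff hp0]
    refine iSup_le fun t => ?_
    rw [ENNReal.le_rpow_inv_iff hp0,
      ← ENNReal.mul_div_cancel two_ne_zero ENNReal.ofNat_ne_top (b := t)]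
    exact hlevel _
  rcases eq_or_ne N 0 with hN0 | hN0
  · exact hN0.trans_le zero_le
  · exact (ENNReal.mul_le_mul_iff_left (by simp [ENNReal.rpow_eq_zero_iff, hN0, hfin])
      (ENNReal.rpow_ne_top_of_nonneg hp1.le hfin)).1 habsorb

lemma weakNorm_tsum_le {α ι : Type*} [MeasurableSpace α] {μ : Measure α} {p : ℝ} {B : ℝ≥0∞}
    [Countable ι] {f : ι → α → ℝ≥0∞} (hp : 0 < p)
    (hpartial : ∀ s : Finset ι, weakNorm (fun x => ∑ i ∈ s, f i x) p μ ≤ B) :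
    weakNorm (fun x => ∑' i, f i x) p μ ≤ B := by
  refine (weakNorm_le_iff hp).2 fun t ht0 ht => ?_
  have hunion : {x | t < ∑' i, f i x} = ⋃ s : Finset ι, {x | t < ∑ i ∈ s, f i x} := by
    ext x
    simp only [mem_ofPred_eq, mem_iUnion, ENNReal.tsum_eq_iSup_sum, lt_iSup_iff]
  have hmono : Monotone fun s : Finset ι => {x | t < ∑ i ∈ s, f i x} :=
    fun s s' hs x (hx : t < _) => hx.trans_le (Finset.sum_le_sum_of_subset hs)
  rw [hunion, hmono.measure_iUnion]
  exact iSup_le fun s => (weakNorm_le_iff hp).1 (hpartial s) t ht0 ht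

section Laminar

variable {α : Type*}

/-- A laminar family of sets: any two members are nested or disjoint. -/
def IsLaminar (S : Set (Set α)) : Prop :=
  ∀ Q ∈ S, ∀ R ∈ S, Q ⊆ R ∨ R ⊆ Q ∨ Disjoint Q R

lemma IsLaminar.mono {S T : Set (Set α)} (hT : IsLaminar T) (hST : S ⊆ T) : IsLaminar S :=
  fun Q hQ R hR => hT Q (hST hQ) R (hST hR)

lemma IsLaminar.pairwiseDisjoint_maximal {S : Set (Set α)} (hS : IsLaminar S)
    {P : Set α → Prop} (hP : ∀ Q, P Q → Q ∈ S) : {Q | Maximal P Q}.PairwiseDisjoint id := by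
  intro Q hQ R hR hne
  rcases hS Q (hP Q hQ.1) R (hP R hR.1) with hQR | hRQ | hdisj
  · exact absurd (hQ.eq_of_subset hR.1 hQR) hne
  · exact absurd (hR.eq_of_subset hQ.1 hRQ).symm hne
  · exact hdisj

lemma IsLaminar.exists_least {s : Finset (Set α)} (hs : IsLaminar (s : Set (Set α)))
    (hne : s.Nonempty) {x : α} (hx : ∀ R ∈ s, x ∈ R) : ∃ P ∈ s, ∀ R ∈ s, P ⊆ R := by
  obtain ⟨P, hP⟩ := s.exists_minimal hne
  refine ⟨P, hP.1, fun R hR => ?_⟩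
  rcases hs P hP.1 R hR with hPR | hRP | hdisj
  · exact hPR
  · exact hP.2 hR hRP
  · exact absurd (hx R hR) (disjoint_left.1 hdisj (hx P hP.1))

/-- The step function `∑_{R ∈ s} a_R χ_R`. -/
noncomputable def indicatorSum (s : Finset (Set α)) (a : Set α → ℝ≥0∞) (x : α) : ℝ≥0∞ :=
  ∑ R ∈ s, R.indicator (fun _ => a R) x

open scoped Classical in
/-- The sum of the coefficients `a_R` over the members of `s` containing `Q`: the part of
`indicatorSum s a` that is constant on `Q`. -/
noncomputable def ancestorSum (s : Finset (Set α)) (a : Set α → ℝ≥0∞) (Q : Set α) : ℝ≥0∞ :=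
  ∑ R ∈ s with Q ⊆ R, a R

open scoped Classical in
/-- The stopping sets of `indicatorSum s a` at height `l`: the maximal members of `s` whose
ancestors already sum up to more than `l`. -/
noncomputable def stoppingSets (s : Finset (Set α)) (a : Set α → ℝ≥0∞) (l : ℝ≥0∞) :
    Finset (Set α) :=
  {Q ∈ s | Maximal (fun R => R ∈ s ∧ l < ancestorSum s a R) Q}

variable {s : Finset (Set α)} {a : Set α → ℝ≥0∞} {l : ℝ≥0∞} {Q : Set α} {x : α}

lemma mem_stoppingSets :
    Q ∈ stoppingSets s a l ↔ Maximal (fun R => R ∈ s ∧ l < ancestorSum s a R) Q := by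
  simp only [stoppingSets, Finset.mem_filter, and_iff_right_iff_imp]
  exact fun hQ => hQ.1.1

lemma stoppingSets_subset : stoppingSets s a l ⊆ s :=
  fun _ hQ => (mem_stoppingSets.1 hQ).1.1

lemma pairwiseDisjoint_stoppingSets (hs : IsLaminar (s : Set (Set α))) :
    (stoppingSets s a l : Set (Set α)).PairwiseDisjoint id :=
  (hs.pairwiseDisjoint_maximal fun _ hQ => hQ.1).subset fun _ hQ => mem_stoppingSets.1 hQ

open scoped Classical in
lemma indicatorSum_eq_sum_filter_mem : indicatorSum s a x = ∑ R ∈ s with x ∈ R, a R := by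
  simp only [indicatorSum, indicator_apply, Finset.sum_filter]

lemma ancestorSum_le_indicatorSum (hx : x ∈ Q) : ancestorSum s a Q ≤ indicatorSum s a x := by
  classical
  rw [indicatorSum_eq_sum_filter_mem]
  exact Finset.sum_le_sum_of_subset
    (Finset.monotone_filter_right s fun R _ (hQR : Q ⊆ R) => hQR hx)

lemma exists_ancestorSum_eq_indicatorSum (hs : IsLaminar (s : Set (Set α)))
    (hx : indicatorSum s a x ≠ 0) : ∃ P ∈ s, x ∈ P ∧ indicatorSum s a x = ancestorSum s a P := by
  classical
  rw [indicatorSum_eq_sum_filter_mem] at hx ⊢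
  obtain ⟨P, hP, hleast⟩ := (hs.mono (Finset.filter_subset (x ∈ ·) s)).exists_least
    (Finset.nonempty_of_sum_ne_zero hx) (x := x) fun R hR => (Finset.mem_filter.1 hR).2
  obtain ⟨hPs, hxP⟩ := Finset.mem_filter.1 hP
  refine ⟨P, hPs, hxP, Finset.sum_congr (Finset.filter_congr fun R hR => ?_) fun _ _ => rfl⟩
  exact ⟨fun hxR => hleast R (Finset.mem_filter.2 ⟨hR, hxR⟩), fun hPR => hPR hxP⟩

lemma iUnion_stoppingSets (hs : IsLaminar (s : Set (Set α))) :
    ⋃ Q ∈ stoppingSets s a l, Q = {x | l < indicatorSum s a x} := by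
  classical
  refine Subset.antisymm (iUnion₂_subset fun Q hQ x hx =>
    (mem_stoppingSets.1 hQ).1.2.trans_le (ancestorSum_le_indicatorSum hx)) fun x hx => ?_
  obtain ⟨P, hPs, hxP, hP⟩ := exists_ancestorSum_eq_indicatorSum hs (ne_zero_of_lt hx)
  obtain ⟨Q, hPQ, hQ⟩ := Finset.exists_le_maximal {R ∈ s | l < ancestorSum s a R}
    (Finset.mem_filter.2 ⟨hPs, hP ▸ hx⟩)
  simp only [Finset.mem_filter] at hQ
  exact mem_iUnion₂.2 ⟨Q, mem_stoppingSets.2 hQ, hPQ hxP⟩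

open scoped Classical in
lemma sum_ssuperset_le_of_mem_stoppingSets (hs : IsLaminar (s : Set (Set α)))
    (hQ : Q ∈ stoppingSets s a l) (hx : x ∈ Q) : ∑ R ∈ s with Q ⊂ R, a R ≤ l := by
  rcases Finset.eq_empty_or_nonempty {R ∈ s | Q ⊂ R} with hempty | hne
  · rw [hempty, Finset.sum_empty]
    exact zero_le
  -- maximality of `Q` prevents its parent `P` from exceeding the height `l`
  obtain ⟨P, hP, hleast⟩ := (hs.mono (Finset.filter_subset (Q ⊂ ·) s)).exists_least hne
    (x := x) fun R hR => (Finset.mem_filter.1 hR).2.subset hx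
  obtain ⟨hPs, hQP⟩ := Finset.mem_filter.1 hP
  have hPl : ancestorSum s a P ≤ l := not_lt.1 fun hlt =>
    (mem_stoppingSets.1 hQ).not_prop_of_gt hQP ⟨hPs, hlt⟩
  refine le_trans (Finset.sum_le_sum_of_subset fun R hR => ?_) hPl
  exact Finset.mem_filter.2 ⟨(Finset.mem_filter.1 hR).1, hleast R hR⟩

open scoped Classical in
lemma indicatorSum_le_add_of_mem_stoppingSets (hs : IsLaminar (s : Set (Set α)))
    (hQ : Q ∈ stoppingSets s a l) (hx : x ∈ Q) :
    indicatorSum s a x ≤ l + indicatorSum {R ∈ s | R ⊆ Q} a x := by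
  have hsub : {R ∈ s | x ∈ R} ⊆ {R ∈ s | Q ⊂ R} ∪ {R ∈ s | R ⊆ Q ∧ x ∈ R} := fun R hR => by
    simp only [Finset.mem_filter, Finset.mem_union] at hR ⊢
    rcases hs Q (stoppingSets_subset hQ) R hR.1 with hQR | hRQ | hdisj
    · by_cases hRQ : R ⊆ Q
      · exact .inr ⟨hR.1, hRQ, hR.2⟩
      · exact .inl ⟨hR.1, hQR, hRQ⟩
    · exact .inr ⟨hR.1, hRQ, hR.2⟩
    · exact absurd hR.2 (disjoint_left.1 hdisj hx)
  calc indicatorSum s a x = ∑ R ∈ s with x ∈ R, a R := indicatorSum_eq_sum_filter_mem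
    _ ≤ ∑ R ∈ s with Q ⊂ R, a R + ∑ R ∈ s with R ⊆ Q ∧ x ∈ R, a R :=
        (Finset.sum_le_sum_of_subset hsub).trans
          (le_self_add.trans_eq (Finset.sum_union_inter))
    _ ≤ l + indicatorSum {R ∈ s | R ⊆ Q} a x := by
        rw [indicatorSum_eq_sum_filter_mem, Finset.filter_filter]
        gcongr
        exact sum_ssuperset_le_of_mem_stoppingSets hs hQ hx

open scoped Classical in
lemma exists_mem_stoppingSets_lt_indicatorSum (hs : IsLaminar (s : Set (Set α)))
    (hx : 2 * l < indicatorSum s a x) :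
    ∃ Q ∈ stoppingSets s a l, x ∈ Q ∧ l < indicatorSum {R ∈ s | R ⊆ Q} a x := by
  have hxl : x ∈ {x | l < indicatorSum s a x} :=
    (le_mul_of_one_le_left' one_le_two).trans_lt hx
  rw [← iUnion_stoppingSets hs] at hxl
  obtain ⟨Q, hQ, hxQ⟩ := mem_iUnion₂.1 hxl
  rw [two_mul] at hx
  exact ⟨Q, hQ, hxQ,
    lt_of_add_lt_add_left (hx.trans_le (indicatorSum_le_add_of_mem_stoppingSets hs hQ hxQ))⟩

end Laminar

lemma sum_rpow_mul_rpow_le {ι : Type*} (s : Finset ι) (X Y : ι → ℝ≥0∞) {θ : ℝ}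
    (hθ0 : 0 ≤ θ) (hθ1 : θ ≤ 1) :
    ∑ i ∈ s, X i ^ θ * Y i ^ (1 - θ) ≤ (∑ i ∈ s, X i) ^ θ * (∑ i ∈ s, Y i) ^ (1 - θ) := by
  let _ : MeasurableSpace s := ⊤
  have hcount := ENNReal.lintegral_mul_norm_pow_le (μ := Measure.count)
    (f := fun i : s => X i) (g := fun i : s => Y i) measurable_from_top.aemeasurable
    measurable_from_top.aemeasurable hθ0 (sub_nonneg.2 hθ1) (add_sub_cancel _ _)
  simpa only [lintegral_count, tsum_fintype, Finset.sum_coe_sort s fun i => X i ^ θ * Y i ^ (1 - θ),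
    Finset.sum_coe_sort s X, Finset.sum_coe_sort s Y] using hcount

section Testing

variable {α : Type*} [MeasurableSpace α] {μ : Measure α} {s : Finset (Set α)}
  {a F : Set α → ℝ≥0∞} {K : ℝ≥0∞} {p : ℝ}

lemma measurable_indicatorSum (hmeas : ∀ Q ∈ s, MeasurableSet Q) :
    Measurable (indicatorSum s a) :=
  Finset.measurable_fun_sum s fun Q hQ => measurable_const.indicator (hmeas Q hQ)

lemma weakNorm_indicatorSum_le_sum (hmeas : ∀ Q ∈ s, MeasurableSet Q) (hp : 1 ≤ p) :
    weakNorm (indicatorSum s a) p μ ≤ ∑ Q ∈ s, a Q * μ Q ^ (1 / p) := by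
  have hp0 : 0 < p := one_pos.trans_le hp
  have hsum : indicatorSum s a = ∑ Q ∈ s, Q.indicator fun _ => a Q := by
    ext x
    rw [indicatorSum, Finset.sum_apply]
  calc weakNorm (indicatorSum s a) p μ
      ≤ eLpNorm (∑ Q ∈ s, Q.indicator fun _ => a Q) (ENNReal.ofReal p) μ :=
        hsum ▸ weakNorm_le_eLpNorm (measurable_indicatorSum hmeas) hp0
    _ ≤ ∑ Q ∈ s, eLpNorm (Q.indicator fun _ => a Q) (ENNReal.ofReal p) μ :=
        eLpNorm_sum_le
          (fun Q hQ => (measurable_const.indicator (hmeas Q hQ)).aestronglyMeasurable)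
          (by simpa using hp)
    _ = ∑ Q ∈ s, a Q * μ Q ^ (1 / p) := Finset.sum_congr rfl fun Q hQ => by
        rw [eLpNorm_indicator_const (hmeas Q hQ) (by simpa using hp0) ENNReal.ofReal_ne_top,
          ENNReal.toReal_ofReal hp0.le, enorm_eq_self]

open scoped Classical in
lemma mul_measure_rpow_le_of_testing {Q : Set α} (hQs : Q ∈ s) (hQ : MeasurableSet Q)
    (hμ : μ Q ≠ ∞) (hp : 1 < p)
    (htest : ∫⁻ x in Q, indicatorSum {R ∈ s | R ⊆ Q} a x ∂μ ≤
      F Q ^ (1 / p) * μ Q ^ (1 - 1 / p)) :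
    a Q * μ Q ^ (1 / p) ≤ F Q ^ (1 / p) := by
  have hp0 : 0 < p := one_pos.trans hp
  have hexp : 0 < 1 - 1 / p := sub_pos.2 ((div_lt_one hp0).2 hp)
  rcases eq_or_ne (μ Q) 0 with hμ0 | hμ0
  · simp [hμ0, hp0]
  refine (ENNReal.mul_le_mul_iff_left (c := μ Q ^ (1 - 1 / p))
    (by simp [ENNReal.rpow_eq_zero_iff, hμ0, hμ])
    (ENNReal.rpow_ne_top_of_nonneg hexp.le hμ)).1 ?_
  calc a Q * μ Q ^ (1 / p) * μ Q ^ (1 - 1 / p) = ∫⁻ _ in Q, a Q ∂μ := by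
        rw [mul_assoc, ← ENNReal.rpow_add _ _ hμ0 hμ, add_sub_cancel, ENNReal.rpow_one,
          setLIntegral_const]
    _ ≤ ∫⁻ x in Q, indicatorSum {R ∈ s | R ⊆ Q} a x ∂μ := by
        refine setLIntegral_mono' hQ fun x hx => ?_
        rw [indicatorSum_eq_sum_filter_mem]
        exact Finset.single_le_sum (f := a) (fun _ _ => zero_le) (by simp [hQs, hx])
    _ ≤ F Q ^ (1 / p) * μ Q ^ (1 - 1 / p) := htest

open scoped Classical in
lemma goodLambda_of_testing (hs : IsLaminar (s : Set (Set α)))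
    (hmeas : ∀ Q ∈ s, MeasurableSet Q) (hp : 1 ≤ p)
    (htest : ∀ Q ∈ s, ∫⁻ x in Q, indicatorSum {R ∈ s | R ⊆ Q} a x ∂μ ≤
      F Q ^ (1 / p) * μ Q ^ (1 - 1 / p))
    (hF : ∀ t ⊆ s, (t : Set (Set α)).PairwiseDisjoint id → ∑ Q ∈ t, F Q ≤ K) (l : ℝ≥0∞) :
    l * μ {x | 2 * l < indicatorSum s a x} ≤
      K ^ (1 / p) * μ {x | l < indicatorSum s a x} ^ (1 - 1 / p) := by
  have hp0 : 0 < p := one_pos.trans_le hp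
  have hp1 : 1 / p ≤ 1 := (div_le_one hp0).2 hp
  set M := stoppingSets s a l
  set A : Set α → α → ℝ≥0∞ := fun Q => indicatorSum {R ∈ s | R ⊆ Q} a
  have hM : ∀ Q ∈ M, Q ∈ s := fun Q hQ => stoppingSets_subset hQ
  have hA : ∀ Q, Measurable (A Q) := fun Q =>
    measurable_indicatorSum fun R hR => hmeas R (Finset.mem_of_mem_filter R hR)
  have hdisj : (M : Set (Set α)).PairwiseDisjoint id := pairwiseDisjoint_stoppingSets hs
  have hunion : ∑ Q ∈ M, μ Q = μ {x | l < indicatorSum s a x} := by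
    rw [← iUnion_stoppingSets hs]
    exact (measure_biUnion_finset (f := id) hdisj fun Q hQ => hmeas Q (hM Q hQ)).symm
  have hcover : {x | 2 * l < indicatorSum s a x} ⊆ ⋃ Q ∈ M, {x | l ≤ A Q x} ∩ Q := fun x hx => by
    obtain ⟨Q, hQ, hxQ, hl⟩ := exists_mem_stoppingSets_lt_indicatorSum hs hx
    exact mem_iUnion₂.2 ⟨Q, hQ, hl.le, hxQ⟩
  calc l * μ {x | 2 * l < indicatorSum s a x}
      ≤ l * ∑ Q ∈ M, μ ({x | l ≤ A Q x} ∩ Q) := by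
        gcongr
        exact (measure_mono hcover).trans (measure_biUnion_finset_le _ _)
    _ = ∑ Q ∈ M, l * μ.restrict Q {x | l ≤ A Q x} := by
        rw [Finset.mul_sum]
        exact Finset.sum_congr rfl fun Q _ => by
          rw [Measure.restrict_apply (measurableSet_le measurable_const (hA Q))]
    _ ≤ ∑ Q ∈ M, F Q ^ (1 / p) * μ Q ^ (1 - 1 / p) := Finset.sum_le_sum fun Q hQ =>
        (mul_meas_ge_le_lintegral (hA Q) l).trans (htest Q (hM Q hQ))
    _ ≤ (∑ Q ∈ M, F Q) ^ (1 / p) * (∑ Q ∈ M, μ Q) ^ (1 - 1 / p) :=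
        sum_rpow_mul_rpow_le M F μ (by positivity) hp1
    _ ≤ K ^ (1 / p) * μ {x | l < indicatorSum s a x} ^ (1 - 1 / p) := by
        rw [hunion]
        gcongr
        exact hF M stoppingSets_subset hdisj

open scoped Classical in
theorem weakNorm_indicatorSum_le_of_testing (hs : IsLaminar (s : Set (Set α)))
    (hmeas : ∀ Q ∈ s, MeasurableSet Q) (hμ : ∀ Q ∈ s, μ Q ≠ ∞) (hp : 1 < p)
    (htest : ∀ Q ∈ s, ∫⁻ x in Q, indicatorSum {R ∈ s | R ⊆ Q} a x ∂μ ≤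
      F Q ^ (1 / p) * μ Q ^ (1 - 1 / p))
    (hF : ∀ t ⊆ s, (t : Set (Set α)).PairwiseDisjoint id → ∑ Q ∈ t, F Q ≤ K) :
    weakNorm (indicatorSum s a) p μ ≤ 2 ^ p * K ^ (1 / p) := by
  have hroot : 0 < 1 / p := one_div_pos.2 (one_pos.trans hp)
  rcases eq_or_ne K ∞ with hK | hK
  · rw [hK, ENNReal.top_rpow_of_pos hroot,
      ENNReal.mul_top (by simp [ENNReal.rpow_eq_zero_iff])]
    exact le_top
  have hcube : ∀ Q ∈ s, a Q * μ Q ^ (1 / p) ≠ ∞ := fun Q hQ => by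
    refine ne_top_of_le_ne_top (ENNReal.rpow_ne_top_of_nonneg hroot.le ?_)
      (mul_measure_rpow_le_of_testing hQ (hmeas Q hQ) (hμ Q hQ) hp (htest Q hQ))
    exact ne_top_of_le_ne_top hK (by simpa using hF {Q} (by simpa using hQ) (by simp))
  exact weakNorm_le_of_goodLambda hp
    (ne_top_of_le_ne_top (ENNReal.sum_ne_top.2 hcube)
      (weakNorm_indicatorSum_le_sum hmeas hp.le))
    (goodLambda_of_testing hs hmeas hp.le htest hF)

end Testing

lemma weakNorm_tsum_indicator_le {α : Type*} [MeasurableSpace α] {μ : Measure α} {p : ℝ}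
    {S : Set (Set α)} {a : Set α → ℝ≥0∞} {B : ℝ≥0∞} (hS : S.Countable) (hp : 0 < p)
    (hfinite : ∀ s : Finset (Set α), ↑s ⊆ S → weakNorm (indicatorSum s a) p μ ≤ B) :
    weakNorm (fun x => ∑' Q : S, (Q : Set α).indicator (fun _ => a Q) x) p μ ≤ B := by
  have := hS.to_subtype
  refine weakNorm_tsum_le hp fun s => ?_
  have hmap : (fun x => ∑ Q ∈ s, (Q : Set α).indicator (fun _ => a Q) x) =
      indicatorSum (s.map (.subtype (· ∈ S))) a := by
    ext x
    simp only [indicatorSum, Finset.sum_map, Function.Embedding.subtype_apply]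
  rw [hmap]
  refine hfinite _ fun Q hQ => ?_
  obtain ⟨R, -, rfl⟩ := Finset.mem_map.1 hQ
  exact R.2

lemma sum_mul_measure_rpow_le_of_pairwiseDisjoint {α : Type*} [MeasurableSpace α]
    {ν1 ν2 : Measure α} {p p1 p2 : ℝ} (hp : 0 < p) (hp1 : 0 < p1) (hp2 : 0 < p2)
    (hholder : 1 / p = 1 / p1 + 1 / p2) (C : ℝ≥0∞) {t : Finset (Set α)}
    (ht : (t : Set (Set α)).PairwiseDisjoint id) (hmeas : ∀ Q ∈ t, MeasurableSet Q) :
    ∑ Q ∈ t, (C * (ν1 Q ^ (1 / p1) * ν2 Q ^ (1 / p2))) ^ p ≤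
      (C * (ν1 univ ^ (1 / p1) * ν2 univ ^ (1 / p2))) ^ p := by
  have hexp : 1 / p2 * p = 1 - 1 / p1 * p := by
    rw [eq_sub_iff_add_eq', ← add_mul, ← hholder, one_div_mul_cancel hp.ne']
  have hexp1 : 1 / p1 * p ≤ 1 := sub_nonneg.1 (hexp ▸ by positivity)
  have hpow : ∀ x y : ℝ≥0∞, (C * (x ^ (1 / p1) * y ^ (1 / p2))) ^ p =
      C ^ p * (x ^ (1 / p1 * p) * y ^ (1 - 1 / p1 * p)) := fun x y => by
    rw [ENNReal.mul_rpow_of_nonneg _ _ hp.le, ENNReal.mul_rpow_of_nonneg _ _ hp.le,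
      ← ENNReal.rpow_mul, ← ENNReal.rpow_mul, hexp]
  have hsum : ∀ ν : Measure α, ∑ Q ∈ t, ν Q ≤ ν univ := fun ν =>
    (measure_biUnion_finset (f := id) ht hmeas).symm.trans_le (measure_mono (subset_univ _))
  simp only [hpow, ← Finset.mul_sum]
  gcongr
  refine (sum_rpow_mul_rpow_le t ν1 ν2 (by positivity) hexp1).trans ?_
  gcongr
  · exact hsum ν1
  · exact hsum ν2

section DyadicCubes

variable {n : ℕ} {Q R : Set (Rn n)} {h : ℝ} {D : Set (Set (Rn n))}

lemma HasSide.exists_eq_pi_Ico (hQ : HasSide Q h) :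
    ∃ c : Rn n, Q = univ.pi fun i => Ico (c i) (c i + h) := by
  obtain ⟨c, rfl⟩ := hQ
  exact ⟨c, by ext x; simp⟩

lemma HasSide.measurableSet (hQ : HasSide Q h) : MeasurableSet Q := by
  obtain ⟨c, rfl⟩ := hQ.exists_eq_pi_Ico
  exact .univ_pi fun _ => measurableSet_Ico

lemma HasSide.nonempty_interior (hh : 0 < h) (hQ : HasSide Q h) : (interior Q).Nonempty := by
  obtain ⟨c, rfl⟩ := hQ.exists_eq_pi_Ico
  rw [interior_pi_set finite_univ, univ_pi_nonempty_iff]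
  simpa only [interior_Ico, nonempty_Ioo, lt_add_iff_pos_right] using fun _ => hh

lemma HasSide.eq_of_subset (hh : 0 < h) (hQ : HasSide Q h) (hR : HasSide R h) (hQR : Q ⊆ R) :
    Q = R := by
  obtain ⟨c, rfl⟩ := hQ.exists_eq_pi_Ico
  obtain ⟨d, rfl⟩ := hR.exists_eq_pi_Ico
  have hlt : ∀ i, c i < c i + h := fun i => lt_add_of_pos_right _ hh
  have hsub : ∀ i, Ico (c i) (c i + h) ⊆ Ico (d i) (d i + h) :=
    (univ_pi_subset_univ_pi_iff.1 hQR).resolve_right fun ⟨i, hi⟩ =>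
      (nonempty_Ico.2 (hlt i)).ne_empty hi
  have hcd : c = d := funext fun i => by
    obtain ⟨hdc, hcd⟩ := (Ico_subset_Ico_iff (hlt i)).1 (hsub i)
    exact le_antisymm (le_of_add_le_add_right hcd) hdc
  rw [hcd]

lemma IsDyadicSystem.isLaminar (hD : IsDyadicSystem D) : IsLaminar D := fun Q hQ R hR => by
  rw [← inter_eq_left, ← inter_eq_right, disjoint_iff_inter_eq_empty]
  exact hD.2.1 Q hQ R hR

lemma IsDyadicSystem.isCube (hD : IsDyadicSystem D) (hQ : Q ∈ D) : IsCube Q := by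
  obtain ⟨k, hk⟩ := hD.1 Q hQ
  exact ⟨2 ^ k, by positivity, hk⟩

lemma IsDyadicSystem.measurableSet (hD : IsDyadicSystem D) (hQ : Q ∈ D) : MeasurableSet Q :=
  let ⟨_, hk⟩ := hD.1 Q hQ
  hk.measurableSet

lemma IsDyadicSystem.countable (hD : IsDyadicSystem D) : D.Countable := by
  have hgeneration : ∀ k : ℤ, {Q ∈ D | HasSide Q ((2 : ℝ) ^ k)}.Countable := fun k => by
    have hk : (0 : ℝ) < 2 ^ k := by positivity
    refine PairwiseDisjoint.countable_of_nonempty_interior (s := id) (fun Q hQ R hR hne => ?_)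
      fun Q hQ => hQ.2.nonempty_interior hk
    rcases hD.isLaminar Q hQ.1 R hR.1 with hQR | hRQ | hdisj
    · exact absurd (hQ.2.eq_of_subset hk hR.2 hQR) hne
    · exact absurd (hR.2.eq_of_subset hk hQ.2 hRQ).symm hne
    · exact hdisj
  refine (countable_iUnion hgeneration).mono fun Q hQ => ?_
  obtain ⟨k, hk⟩ := hD.1 Q hQ
  exact mem_iUnion.2 ⟨k, hQ, hk⟩

end DyadicCubes

section Weights

variable {n : ℕ} {p p1 p2 q : ℝ} {v σ : Rn n → ℝ≥0∞} {f : Rn n → ℝ} {Q R : Set (Rn n)}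

lemma one_div_conj (hp : 1 < p) : 1 / conj p = 1 - 1 / p := by
  have hp1 : p - 1 ≠ 0 := (sub_pos.2 hp).ne'
  unfold conj
  field_simp

lemma IsWeight.vweight {w1 w2 : Rn n → ℝ≥0∞} (hw1 : IsWeight w1) (hw2 : IsWeight w2)
    (hp : 0 < p) (hp1 : 0 < p1) (hp2 : 0 < p2) (hholder : 1 / p = 1 / p1 + 1 / p2) :
    IsWeight (vweight p p1 p2 w1 w2) := by
  have hexp : p / p1 + p / p2 = 1 := by
    rw [div_eq_mul_one_div p p1, div_eq_mul_one_div p p2, ← mul_add, ← hholder,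
      mul_one_div_cancel hp.ne']
  have hle : ∀ x, _root_.vweight p p1 p2 w1 w2 x ≤ w1 x + w2 x := fun x =>
    calc w1 x ^ (p / p1) * w2 x ^ (p / p2)
        ≤ (w1 x + w2 x) ^ (p / p1) * (w1 x + w2 x) ^ (p / p2) := by
          gcongr
          · exact le_self_add
          · exact le_add_self
      _ = w1 x + w2 x := by
          rw [← ENNReal.rpow_add_of_nonneg _ _ (by positivity) (by positivity), hexp,
            ENNReal.rpow_one]
  refine ⟨(hw1.1.pow_const _).mul (hw2.1.pow_const _), fun Q hQ => ?_⟩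
  refine ne_top_of_le_ne_top (ENNReal.add_ne_top.2 ⟨hw1.2 Q hQ, hw2.2 Q hQ⟩) ?_
  rw [← lintegral_add_left hw1.1]
  exact lintegral_mono hle

lemma mass_eq_withDensity : mass v Q = volume.withDensity v Q :=
  (withDensity_apply' _ _).symm

lemma wkNorm_eq_weakNorm (g : Rn n → ℝ≥0∞) :
    wkNorm g p v = weakNorm g p (volume.withDensity v) := by
  simp only [wkNorm, weakNorm, mass_eq_withDensity]

/-- The measure `|f|^q σ dx`, whose value on `Q` is `‖f χ_Q‖_{L^q(σ)}^q`. -/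
noncomputable def powMeasure (f : Rn n → ℝ) (q : ℝ) (σ : Rn n → ℝ≥0∞) : Measure (Rn n) :=
  volume.withDensity fun x => eAbs f x ^ q * σ x

lemma lpNorm_eAbs : lpNorm (eAbs f) q σ = powMeasure f q σ univ ^ (1 / q) := by
  rw [powMeasure, withDensity_apply' _ _, Measure.restrict_univ, _root_.lpNorm]

lemma eAbs_indicator : eAbs (Q.indicator f) = Q.indicator (eAbs f) := by
  ext x
  by_cases hx : x ∈ Q <;> simp [eAbs, hx]

lemma lpNorm_eAbs_indicator (hq : 0 < q) (hQ : MeasurableSet Q) :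
    lpNorm (eAbs (Q.indicator f)) q σ = powMeasure f q σ Q ^ (1 / q) := by
  have hpow : (fun x => eAbs (Q.indicator f) x ^ q * σ x) =
      Q.indicator fun x => eAbs f x ^ q * σ x := by
    ext x
    by_cases hx : x ∈ Q <;> simp [eAbs_indicator, hx, hq]
  rw [powMeasure, withDensity_apply' _ _, _root_.lpNorm, hpow, lintegral_indicator hQ]

lemma lpNorm_eAbs_indicator_le (hq : 0 < q) (hQ : MeasurableSet Q) :
    lpNorm (eAbs (Q.indicator f)) q σ ≤ lpNorm (eAbs f) q σ := by
  rw [lpNorm_eAbs_indicator hq hQ, lpNorm_eAbs]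
  gcongr
  exact subset_univ Q

lemma MemLpW.indicator (hf : MemLpW f q σ) (hq : 0 < q) (hQ : MeasurableSet Q) :
    MemLpW (Q.indicator f) q σ :=
  ⟨hf.1.indicator hQ, ne_top_of_le_ne_top hf.2 (lpNorm_eAbs_indicator_le hq hQ)⟩

lemma eAbs_indicator_mul :
    (fun x => eAbs (Q.indicator f) x * σ x) = Q.indicator fun x => eAbs f x * σ x := by
  ext x
  by_cases hx : x ∈ Q <;> simp [eAbs_indicator, hx]

lemma avg_indicator_of_subset {g : Rn n → ℝ≥0∞} (hQ : MeasurableSet Q) (hRQ : R ⊆ Q) :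
    avg (Q.indicator g) R = avg g R := by
  rw [avg, mass, lintegral_indicator hQ, Measure.restrict_restrict hQ, inter_eq_right.2 hRQ,
    avg, mass]

end Weights

section SparseOperator

variable {n : ℕ} {p p1 p2 : ℝ} {v σ1 σ2 g1 g2 : Rn n → ℝ≥0∞} {S : Set (Set (Rn n))} {C : ℝ≥0∞}

lemma measurable_sparseOp (hS : S.Countable) (hmeas : ∀ Q ∈ S, MeasurableSet Q) :
    Measurable (sparseOp S g1 g2) := by
  have := hS.to_subtype
  exact .tsum fun Q : S => measurable_const.indicator (hmeas Q Q.2)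

open scoped Classical in
lemma indicatorSum_filter_subset_le_sparseOp {s : Finset (Set (Rn n))} (hs : ↑s ⊆ S)
    {Q : Set (Rn n)} (hQ : MeasurableSet Q) (x : Rn n) :
    indicatorSum {R ∈ s | R ⊆ Q} (fun R => avg g1 R * avg g2 R) x ≤
      sparseOp S (Q.indicator g1) (Q.indicator g2) x := by
  have hsub : ∀ R ∈ ({R ∈ s | R ⊆ Q} : Finset (Set (Rn n))), R ∈ S := fun R hR =>
    hs (Finset.mem_filter.1 hR).1
  have hlocal : indicatorSum {R ∈ s | R ⊆ Q} (fun R => avg g1 R * avg g2 R) x =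
      ∑ R ∈ s with R ⊆ Q,
        R.indicator (fun _ => avg (Q.indicator g1) R * avg (Q.indicator g2) R) x :=
    Finset.sum_congr rfl fun R hR => by
      have hRQ := (Finset.mem_filter.1 hR).2
      rw [avg_indicator_of_subset hQ hRQ, avg_indicator_of_subset hQ hRQ]
  rw [hlocal, ← Finset.tsum_subtype]
  exact ENNReal.tsum_mono_subtype
    (fun R => R.indicator (fun _ => avg (Q.indicator g1) R * avg (Q.indicator g2) R) x)
    hsub

lemma setLIntegral_sparseOp_mul (hS : S.Countable) (hmeas : ∀ Q ∈ S, MeasurableSet Q)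
    (hv : Measurable v) {Q : Set (Rn n)} (hQ : MeasurableSet Q) :
    ∫⁻ x in Q, sparseOp S g1 g2 x * v x =
      ∫⁻ x in Q, sparseOp S g1 g2 x ∂(volume.withDensity v) := by
  rw [setLIntegral_withDensity_eq_setLIntegral_mul _ hv (measurable_sparseOp hS hmeas) hQ]
  exact lintegral_congr fun x => mul_comm _ _

/-- The weak-type bound for the bilinear sparse operator with general weights: its best constant
is the norm of `(f₁, f₂) ↦ A_S(|f₁|σ₁, |f₂|σ₂)` from `L^{p₁}(σ₁) × L^{p₂}(σ₂)` to `L^{p,∞}(v)`. -/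
def WeakTypeBound (p p1 p2 : ℝ) (v σ1 σ2 : Rn n → ℝ≥0∞) (S : Set (Set (Rn n))) (C : ℝ≥0∞) :
    Prop :=
  ∀ f1 f2 : Rn n → ℝ, MemLpW f1 p1 σ1 → MemLpW f2 p2 σ2 →
    wkNorm (sparseOp S (fun x => eAbs f1 x * σ1 x) (fun x => eAbs f2 x * σ2 x)) p v ≤
      C * (lpNorm (eAbs f1) p1 σ1 * lpNorm (eAbs f2) p2 σ2)

/-- The testing bound for the bilinear sparse operator with general weights: integration against
`v` over each `Q ∈ S`, with `f₁` and `f₂` localised to `Q`. -/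
def TestingBound (p p1 p2 : ℝ) (v σ1 σ2 : Rn n → ℝ≥0∞) (S : Set (Set (Rn n))) (C : ℝ≥0∞) :
    Prop :=
  ∀ Q ∈ S, ∀ f1 f2 : Rn n → ℝ, MemLpW f1 p1 σ1 → MemLpW f2 p2 σ2 →
    (∫⁻ x in Q, sparseOp S (Q.indicator fun y => eAbs f1 y * σ1 y)
        (Q.indicator fun y => eAbs f2 y * σ2 y) x * v x) ≤
      C * (lpNorm (eAbs f1) p1 σ1 * lpNorm (eAbs f2) p2 σ2) * mass v Q ^ (1 / conj p)

lemma WeakTypeBound.mono {C' : ℝ≥0∞} (hC : WeakTypeBound p p1 p2 v σ1 σ2 S C) (hCC' : C ≤ C') :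
    WeakTypeBound p p1 p2 v σ1 σ2 S C' :=
  fun f1 f2 hf1 hf2 => (hC f1 f2 hf1 hf2).trans (by gcongr)

lemma TestingBound.mono {C' : ℝ≥0∞} (hC : TestingBound p p1 p2 v σ1 σ2 S C) (hCC' : C ≤ C') :
    TestingBound p p1 p2 v σ1 σ2 S C' :=
  fun Q hQ f1 f2 hf1 hf2 => (hC Q hQ f1 f2 hf1 hf2).trans (by gcongr)

theorem WeakTypeBound.testingBound (hS : S.Countable) (hmeas : ∀ Q ∈ S, MeasurableSet Q)
    (hv : Measurable v) (hp : 1 < p) (hp1 : 0 < p1) (hp2 : 0 < p2)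
    (hweak : WeakTypeBound p p1 p2 v σ1 σ2 S C) :
    TestingBound p p1 p2 v σ1 σ2 S (ENNReal.ofReal (conj p) * C) := by
  intro Q hQ f1 f2 hf1 hf2
  have hQm := hmeas Q hQ
  have hlocal := hweak (Q.indicator f1) (Q.indicator f2) (hf1.indicator hp1 hQm)
    (hf2.indicator hp2 hQm)
  rw [eAbs_indicator_mul, eAbs_indicator_mul, wkNorm_eq_weakNorm] at hlocal
  rw [setLIntegral_sparseOp_mul hS hmeas hv hQm, one_div_conj hp, mass_eq_withDensity]
  refine (setLIntegral_le_weakNorm_mul (measurable_sparseOp hS hmeas) hp Q).trans ?_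
  rw [mul_assoc (ENNReal.ofReal (conj p)) C]
  gcongr
  refine hlocal.trans ?_
  gcongr
  · exact lpNorm_eAbs_indicator_le hp1 hQm
  · exact lpNorm_eAbs_indicator_le hp2 hQm

open scoped Classical in
lemma TestingBound.setLIntegral_indicatorSum_le {s : Finset (Set (Rn n))} {f1 f2 : Rn n → ℝ}
    {Q : Set (Rn n)} (htest : TestingBound p p1 p2 v σ1 σ2 S C) (hS : S.Countable)
    (hmeas : ∀ R ∈ S, MeasurableSet R) (hv : Measurable v) (hp : 1 < p) (hp1 : 0 < p1)
    (hp2 : 0 < p2) (hf1 : MemLpW f1 p1 σ1) (hf2 : MemLpW f2 p2 σ2) (hs : ↑s ⊆ S) (hQ : Q ∈ S) :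
    ∫⁻ x in Q, indicatorSum {R ∈ s | R ⊆ Q}
        (fun R => avg (fun y => eAbs f1 y * σ1 y) R * avg (fun y => eAbs f2 y * σ2 y) R) x
        ∂(volume.withDensity v) ≤
      C * (powMeasure f1 p1 σ1 Q ^ (1 / p1) * powMeasure f2 p2 σ2 Q ^ (1 / p2)) *
        volume.withDensity v Q ^ (1 - 1 / p) := by
  have hQm := hmeas Q hQ
  have hlocal := htest Q hQ (Q.indicator f1) (Q.indicator f2) (hf1.indicator hp1 hQm)
    (hf2.indicator hp2 hQm)
  rw [eAbs_indicator_mul, eAbs_indicator_mul, indicator_indicator, indicator_indicator,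
    inter_self, lpNorm_eAbs_indicator hp1 hQm, lpNorm_eAbs_indicator hp2 hQm, one_div_conj hp,
    mass_eq_withDensity, setLIntegral_sparseOp_mul hS hmeas hv hQm] at hlocal
  exact (lintegral_mono fun x => indicatorSum_filter_subset_le_sparseOp hs hQm x).trans hlocal

theorem TestingBound.weakTypeBound (hS : S.Countable) (hlam : IsLaminar S)
    (hmeas : ∀ Q ∈ S, MeasurableSet Q) (hv : Measurable v) (hfin : ∀ Q ∈ S, mass v Q ≠ ∞)
    (hp : 1 < p) (hp1 : 0 < p1) (hp2 : 0 < p2) (hholder : 1 / p = 1 / p1 + 1 / p2)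
    (htest : TestingBound p p1 p2 v σ1 σ2 S C) :
    WeakTypeBound p p1 p2 v σ1 σ2 S (2 ^ p * C) := by
  intro f1 f2 hf1 hf2
  have hp0 : 0 < p := one_pos.trans hp
  have hroot : ∀ y : ℝ≥0∞, (y ^ p) ^ (1 / p) = y := fun y => by
    rw [one_div, ENNReal.rpow_rpow_inv hp0.ne']
  rw [wkNorm_eq_weakNorm, mul_assoc, lpNorm_eAbs, lpNorm_eAbs]
  refine weakNorm_tsum_indicator_le (a := fun R =>
    avg (fun y => eAbs f1 y * σ1 y) R * avg (fun y => eAbs f2 y * σ2 y) R) hS hp0 fun s hs => ?_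
  have hfinite := weakNorm_indicatorSum_le_of_testing (hlam.mono hs)
    (fun Q hQ => hmeas Q (hs hQ))
    (fun Q hQ => mass_eq_withDensity (v := v) ▸ hfin Q (hs hQ)) hp
    (F := fun Q =>
      (C * (powMeasure f1 p1 σ1 Q ^ (1 / p1) * powMeasure f2 p2 σ2 Q ^ (1 / p2))) ^ p)
    (fun Q hQ => by
      rw [hroot]
      exact htest.setLIntegral_indicatorSum_le hS hmeas hv hp hp1 hp2 hf1 hf2 hs (hs hQ))
    fun t ht hdisj => sum_mul_measure_rpow_le_of_pairwiseDisjoint hp0 hp1 hp2 hholder C hdisj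
      fun Q hQ => hmeas Q (hs (ht hQ))
  rwa [hroot] at hfinite

end SparseOperator

theorem statement4_general {n : ℕ} {p p1 p2 : ℝ} (hp1 : 0 < p1) (hp2 : 0 < p2)
    (hp : 1 / p = 1 / p1 + 1 / p2) (hp0 : 1 < p) :
    ∃ c : ℝ≥0∞, c ≠ ∞ ∧ ∀ v σ1 σ2 : Rn n → ℝ≥0∞, IsWeight v →
      ∀ D S : Set (Set (Rn n)), IsDyadicSystem D → S ⊆ D → ∀ C : ℝ≥0∞,
        (WeakTypeBound p p1 p2 v σ1 σ2 S C → TestingBound p p1 p2 v σ1 σ2 S (c * C)) ∧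
        (TestingBound p p1 p2 v σ1 σ2 S C → WeakTypeBound p p1 p2 v σ1 σ2 S (c * C)) := by
  refine ⟨max (ENNReal.ofReal (conj p)) (2 ^ p), ?_, fun v σ1 σ2 hv D S hD hSD C => ?_⟩
  · exact max_ne_top ENNReal.ofReal_ne_top
      (ENNReal.rpow_ne_top_of_nonneg (one_pos.trans hp0).le ENNReal.ofNat_ne_top)
  have hS : S.Countable := hD.countable.mono hSD
  have hmeas : ∀ Q ∈ S, MeasurableSet Q := fun Q hQ => hD.measurableSet (hSD hQ)
  have hfin : ∀ Q ∈ S, mass v Q ≠ ∞ := fun Q hQ => hv.2 Q (hD.isCube (hSD hQ))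
  constructor
  · intro hweak
    refine (hweak.testingBound hS hmeas hv.1 hp0 hp1 hp2).mono ?_
    gcongr
    exact le_max_left _ _
  · intro htest
    refine (htest.weakTypeBound hS (hD.isLaminar.mono hSD) hmeas hv.1 hfin hp0 hp1 hp2 hp).mono ?_
    gcongr
    exact le_max_right _ _

/-- Equivalence, with comparable constants, between the global weak-type bound and
the local testing bound for the bilinear sparse operator. -/
theorem statement4 {n : ℕ} (p p1 p2 : ℝ)
    (hp1 : 1 < p1) (hp2 : 1 < p2) (hp : 1 / p = 1 / p1 + 1 / p2) (hp0 : 1 < p) :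
    ∃ c : ℝ≥0∞, c ≠ ∞ ∧
      ∀ w1 w2 : Rn n → ℝ≥0∞, IsWeight w1 → IsWeight w2 →
        APconst p p1 p2 w1 w2 ≠ ∞ →
        ∀ D S : Set (Set (Rn n)), IsDyadicSystem D → S ⊆ D → IsSparse S →
          ∀ C : ℝ≥0∞,
            ((∀ f1 f2 : Rn n → ℝ,
                MemLpW f1 p1 (dualW p1 w1) → MemLpW f2 p2 (dualW p2 w2) →
                wkNorm
                    (sparseOp S (fun x => eAbs f1 x * dualW p1 w1 x)
                      (fun x => eAbs f2 x * dualW p2 w2 x)) p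
                    (vweight p p1 p2 w1 w2) ≤
                  C * (lpNorm (eAbs f1) p1 (dualW p1 w1) *
                    lpNorm (eAbs f2) p2 (dualW p2 w2))) →
              ∀ Q ∈ S, ∀ f1 f2 : Rn n → ℝ,
                MemLpW f1 p1 (dualW p1 w1) → MemLpW f2 p2 (dualW p2 w2) →
                (∫⁻ x in Q,
                    sparseOp S (Q.indicator fun y => eAbs f1 y * dualW p1 w1 y)
                      (Q.indicator fun y => eAbs f2 y * dualW p2 w2 y) x *
                      vweight p p1 p2 w1 w2 x) ≤
                  c * C * (lpNorm (eAbs f1) p1 (dualW p1 w1) *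
                      lpNorm (eAbs f2) p2 (dualW p2 w2)) *
                    mass (vweight p p1 p2 w1 w2) Q ^ (1 / conj p)) ∧
            ((∀ Q ∈ S, ∀ f1 f2 : Rn n → ℝ,
                MemLpW f1 p1 (dualW p1 w1) → MemLpW f2 p2 (dualW p2 w2) →
                (∫⁻ x in Q,
                    sparseOp S (Q.indicator fun y => eAbs f1 y * dualW p1 w1 y)
                      (Q.indicator fun y => eAbs f2 y * dualW p2 w2 y) x *
                      vweight p p1 p2 w1 w2 x) ≤
                  C * (lpNorm (eAbs f1) p1 (dualW p1 w1) *
                      lpNorm (eAbs f2) p2 (dualW p2 w2)) *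
                    mass (vweight p p1 p2 w1 w2) Q ^ (1 / conj p)) →
              ∀ f1 f2 : Rn n → ℝ,
                MemLpW f1 p1 (dualW p1 w1) → MemLpW f2 p2 (dualW p2 w2) →
                wkNorm
                    (sparseOp S (fun x => eAbs f1 x * dualW p1 w1 x)
                      (fun x => eAbs f2 x * dualW p2 w2 x)) p
                    (vweight p p1 p2 w1 w2) ≤
                  c * C * (lpNorm (eAbs f1) p1 (dualW p1 w1) *
                    lpNorm (eAbs f2) p2 (dualW p2 w2))) := by
  obtain ⟨c, hc, hequiv⟩ :=
    statement4_general (n := n) (one_pos.trans hp1) (one_pos.trans hp2) hp hp0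
  exact ⟨c, hc, fun w1 w2 hw1 hw2 _ D S hD hSD _ C => hequiv _ _ _
    (hw1.vweight hw2 (one_pos.trans hp0) (one_pos.trans hp1) (one_pos.trans hp2) hp) D S hD hSD C⟩
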